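/- arXiv:2309.03872 — 8 statements merged into one kernel-verified Lean document; each statement's English description precedes it below -/
import Mathlib

section
/- (Mixing one-time pad, covering Lemmas 5–7 of the paper.) Let F be a finite field, let k ≤ m be positive integers, and let β_1, …, β_k ∈ F be pairwise distinct and nonzero. Let (Ω, ℙ) be a probability space, V : Ω → (Fin k → F) any random variable, and Z : Ω → (Fin m → F) uniformly distributed and independent of V. Define A : Ω → (Fin k → F) by A_j = V_j + Σ_{i=1}^m β_j^i Z_i. Then A is uniformly distributed on Fin k → F, and V and A are independent. -/
open MeasureTheory ProbabilityTheory

lemma otp_eq_unif {α : Type*} [Fintype α] [Nonempty α] [MeasurableSpace α]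
    [MeasurableSingletonClass α] (ν : Measure α) [IsProbabilityMeasure ν]
    (h : ∀ a b, ν {a} = ν {b}) : ν = (PMF.uniformOfFintype α).toMeasure := by
  refine Measure.ext_of_singleton fun a => ?_
  rw [PMF.toMeasure_apply_singleton _ _ (measurableSet_singleton a), PMF.uniformOfFintype_apply]
  have h1 : ∑ b : α, ν {b} = 1 := by
    rw [sum_measure_singleton]; simp
  rw [Finset.sum_congr rfl (fun b _ => h b a)] at h1
  simp only [Finset.sum_const, nsmul_eq_mul, Finset.card_univ] at h1
  rw [mul_comm] at h1
  exact ENNReal.eq_inv_of_mul_eq_one_left h1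

lemma otp_map_equiv {α : Type*} [Fintype α] [Nonempty α] [MeasurableSpace α]
    [DiscreteMeasurableSpace α] (e : α ≃ α) :
    Measure.map e (PMF.uniformOfFintype α).toMeasure = (PMF.uniformOfFintype α).toMeasure := by
  have hm : Measurable e := Measurable.of_discrete
  have := Measure.isProbabilityMeasure_map (μ := (PMF.uniformOfFintype α).toMeasure) hm.aemeasurable
  refine otp_eq_unif _ fun a b => ?_
  have key : ∀ a, e ⁻¹' {a} = {e.symm a} := by
    intro a; ext x; simp [Equiv.eq_symm_apply]
  rw [Measure.map_apply hm (measurableSet_singleton a),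
    Measure.map_apply hm (measurableSet_singleton b), key, key,
    PMF.toMeasure_apply_singleton _ _ (measurableSet_singleton _),
    PMF.toMeasure_apply_singleton _ _ (measurableSet_singleton _)]
  simp

lemma otp_map_add_hom {α γ : Type*} [Fintype α] [AddCommGroup α] [MeasurableSpace α]
    [DiscreteMeasurableSpace α] [Fintype γ] [AddCommGroup γ] [MeasurableSpace γ]
    [DiscreteMeasurableSpace γ] (f : α →+ γ) (hf : Function.Surjective f) :
    Measure.map f (PMF.uniformOfFintype α).toMeasure = (PMF.uniformOfFintype γ).toMeasure := by
  have hm : Measurable f := Measurable.of_discrete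
  have := Measure.isProbabilityMeasure_map (μ := (PMF.uniformOfFintype α).toMeasure) hm.aemeasurable
  refine otp_eq_unif _ fun a b => ?_
  obtain ⟨z, hz⟩ := hf (b - a)
  rw [Measure.map_apply hm (measurableSet_singleton a),
    Measure.map_apply hm (measurableSet_singleton b)]
  conv_rhs => rw [← otp_map_equiv (Equiv.addRight z)]
  rw [Measure.map_apply Measurable.of_discrete MeasurableSet.of_discrete]
  congr 1
  ext x
  simp only [Set.mem_preimage, Set.mem_singleton_iff, Equiv.coe_addRight, map_add, hz]
  constructor
  · intro h; rw [h]; abel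
  · intro h; rw [← sub_eq_zero] at h ⊢; rw [← h]; abel

lemma otp_surj {F : Type*} [Field F] (k m : ℕ) (hk : 1 ≤ k) (hkm : k ≤ m)
    (β : Fin k → F) (hβ : Function.Injective β) (hβ0 : ∀ j, β j ≠ 0) (b : Fin k → F) :
    ∃ z : Fin m → F, ∀ j, ∑ i : Fin m, β j ^ ((i : ℕ) + 1) * z i = b j := by
  classical
  let p := Lagrange.interpolate Finset.univ β (fun j => b j / β j)
  have hd : p.degree < (k : ℕ) := by
    have h := Lagrange.degree_interpolate_lt (s := Finset.univ) (v := β)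
      (fun j => b j / β j) hβ.injOn
    rw [Finset.card_univ, Fintype.card_fin] at h
    exact h
  have hn : p.natDegree < m := by
    refine lt_of_lt_of_le ?_ hkm
    by_cases h0 : p = 0
    · rw [h0, Polynomial.natDegree_zero]; omega
    · exact (Polynomial.natDegree_lt_iff_degree_lt h0).2 hd
  refine ⟨fun i => p.coeff i, fun j => ?_⟩
  have he : p.eval (β j) = b j / β j :=
    Lagrange.eval_interpolate_at_node _ hβ.injOn (Finset.mem_univ j)
  rw [Polynomial.eval_eq_sum_range' hn] at he
  rw [Fin.sum_univ_eq_sum_range (fun i => β j ^ (i + 1) * p.coeff i) m]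
  rw [eq_div_iff (hβ0 j), Finset.sum_mul] at he
  rw [← he]
  exact Finset.sum_congr rfl fun i _ => by ring

/-- Mixing one-time pad: for pairwise distinct nonzero `β_1, …, β_k` and `Z` uniform on
`Fin m → F` independent of `V`, the vector `A` with `A_j = V_j + ∑_{i=1}^m β_j^i Z_i`
is uniform on `Fin k → F` and independent of `V`. -/
theorem stmt4 {F : Type*} [Field F] [Fintype F] [MeasurableSpace F] [DiscreteMeasurableSpace F]
    {Ω : Type*} [MeasurableSpace Ω] (Pr : Measure Ω) [IsProbabilityMeasure Pr]
    (k m : ℕ) (hk : 1 ≤ k) (hkm : k ≤ m)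
    (β : Fin k → F) (hβ : Function.Injective β) (hβ0 : ∀ j, β j ≠ 0)
    (V : Ω → (Fin k → F)) (Z : Ω → (Fin m → F))
    (hVm : Measurable V) (hZm : Measurable Z)
    (hZ : Measure.map Z Pr = (PMF.uniformOfFintype (Fin m → F)).toMeasure)
    (hindep : IndepFun V Z Pr) :
    Measure.map (fun ω (j : Fin k) => V ω j + ∑ i : Fin m, β j ^ ((i : ℕ) + 1) * Z ω i) Pr
      = (PMF.uniformOfFintype (Fin k → F)).toMeasure ∧
    IndepFun V (fun ω (j : Fin k) => V ω j + ∑ i : Fin m, β j ^ ((i : ℕ) + 1) * Z ω i) Pr := by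
  let L : (Fin m → F) →+ (Fin k → F) :=
    { toFun := fun z j => ∑ i : Fin m, β j ^ ((i : ℕ) + 1) * z i
      map_zero' := by ext j; simp
      map_add' := by intro x y; ext j; simp [mul_add, Finset.sum_add_distrib] }
  have hL : Function.Surjective L := fun b => by
    obtain ⟨z, hz⟩ := otp_surj k m hk hkm β hβ hβ0 b
    exact ⟨z, funext hz⟩
  have hLm : Measurable L := Measurable.of_discrete
  have hB : Measure.map (fun ω => L (Z ω)) Pr = (PMF.uniformOfFintype (Fin k → F)).toMeasure := by
    rw [← otp_map_add_hom L hL, ← hZ, Measure.map_map hLm hZm]; rfl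
  have hBm : Measurable (fun ω => L (Z ω)) := hLm.comp hZm
  have hi : IndepFun V (fun ω => L (Z ω)) Pr := hindep.comp measurable_id hLm
  have hj := (indepFun_iff_map_prod_eq_prod_map_map hVm.aemeasurable hBm.aemeasurable).1 hi
  rw [hB] at hj
  change Measure.map (fun ω => V ω + L (Z ω)) Pr = _ ∧ IndepFun V (fun ω => V ω + L (Z ω)) Pr
  have hAm : Measurable (fun ω => V ω + L (Z ω)) :=
    (Measurable.of_discrete (f := fun p : (Fin k → F) × (Fin k → F) => p.1 + p.2)).comp
      (hVm.prodMk hBm)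
  have := Measure.isProbabilityMeasure_map (μ := Pr) hVm.aemeasurable
  have hs := MeasurePreserving.skew_product (MeasurePreserving.id (Measure.map V Pr))
    (μc := (PMF.uniformOfFintype (Fin k → F)).toMeasure)
    (μd := (PMF.uniformOfFintype (Fin k → F)).toMeasure)
    (g := fun v b => v + b) Measurable.of_discrete
    (Filter.Eventually.of_forall fun v => otp_map_equiv (Equiv.addLeft v))
  have hVA : Measure.map (fun ω => (V ω, V ω + L (Z ω))) Pr =
      (Measure.map V Pr).prod (PMF.uniformOfFintype (Fin k → F)).toMeasure := by
    rw [← hs.map_eq, ← hj, Measure.map_map hs.measurable (hVm.prodMk hBm)]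
    rfl
  have hA : Measure.map (fun ω => V ω + L (Z ω)) Pr =
      (PMF.uniformOfFintype (Fin k → F)).toMeasure := by
    have := congrArg (Measure.map Prod.snd) hVA
    rw [Measure.map_map measurable_snd (hVm.prodMk hAm), Measure.map_snd_prod] at this
    rw [measure_univ, one_smul] at this
    exact this
  refine ⟨hA, ?_⟩
  rw [indepFun_iff_map_prod_eq_prod_map_map hVm.aemeasurable hAm.aemeasurable, hA, hVA]
end

section
/- (Lemma 5: security against N communicating databases.) Let F be a finite field, N ≥ 1, and let β_1, …, β_N ∈ F be pairwise distinct and nonzero. Let (Ω, ℙ) be a probability space, P : Ω → F any random variable, and X : Ω → (Fin N → F) uniformly distributed and independent of P. Define U : Ω → (Fin N → F) by U_k = P + Σ_{ℓ=1}^N β_k^ℓ X_ℓ. Then P and U are independent; i.e., any N of the encoded shares P + Σ_ℓ (1+α_j)^ℓ X_ℓ reveal no information about the secret P. -/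
open MeasureTheory ProbabilityTheory

/-- Security against `N` communicating databases: for pairwise distinct nonzero
`β_1, …, β_N` and `X` uniform on `Fin N → F` independent of the secret `P`,
the `N` encoded shares `U_k = P + ∑_{ℓ=1}^N β_k^ℓ X_ℓ` are independent of `P`. -/
theorem stmt5 {F : Type*} [Field F] [Fintype F] [MeasurableSpace F] [DiscreteMeasurableSpace F]
    {Ω : Type*} [MeasurableSpace Ω] (Pr : Measure Ω) [IsProbabilityMeasure Pr]
    (N : ℕ) (hN : 1 ≤ N)
    (β : Fin N → F) (hβ : Function.Injective β) (hβ0 : ∀ j, β j ≠ 0)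
    (P : Ω → F) (X : Ω → (Fin N → F))
    (hPm : Measurable P) (hXm : Measurable X)
    (hX : Measure.map X Pr = (PMF.uniformOfFintype (Fin N → F)).toMeasure)
    (hindep : IndepFun P X Pr) :
    IndepFun P (fun ω (k : Fin N) => P ω + ∑ ℓ : Fin N, β k ^ ((ℓ : ℕ) + 1) * X ω ℓ) Pr := by
  classical
  let g : F → (Fin N → F) → (Fin N → F) :=
    fun p x k => p + ∑ ℓ : Fin N, β k ^ ((ℓ : ℕ) + 1) * x ℓ
  have ginj : ∀ p, Function.Injective (g p) := by
    intro p x y hxy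
    have h0 : (fun i => x i - y i) = 0 := by
      apply Matrix.eq_zero_of_forall_index_sum_pow_mul_eq_zero hβ
      intro j
      have h1 := congrFun hxy j
      simp only [g, add_right_inj] at h1
      apply mul_left_cancel₀ (hβ0 j)
      rw [mul_zero, Finset.mul_sum, ← sub_eq_zero.mpr h1, ← Finset.sum_sub_distrib]
      refine Finset.sum_congr rfl fun i _ => ?_
      ring
    funext i
    exact sub_eq_zero.mp (congrFun h0 i)
  have huni : ∀ p (t : Set (Fin N → F)), Pr (X ⁻¹' (g p ⁻¹' t)) = Pr (X ⁻¹' t) := by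
    intro p t
    rw [← Measure.map_apply hXm (.of_discrete), ← Measure.map_apply hXm (.of_discrete), hX,
      PMF.toMeasure_uniformOfFintype_apply _ (.of_discrete),
      PMF.toMeasure_uniformOfFintype_apply _ (.of_discrete)]
    congr 2
    let e : (Fin N → F) ≃ (Fin N → F) :=
      Equiv.ofBijective (g p) (Finite.injective_iff_bijective.mp (ginj p))
    exact Fintype.card_congr (e.subtypeEquiv (fun a => Iff.rfl))
  set U : Ω → (Fin N → F) :=
    fun ω (k : Fin N) => P ω + ∑ ℓ : Fin N, β k ^ ((ℓ : ℕ) + 1) * X ω ℓ with hU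
  have key : ∀ (s : Set F) (t : Set (Fin N → F)),
      Pr (P ⁻¹' s ∩ U ⁻¹' t) = Pr (P ⁻¹' s) * Pr (X ⁻¹' t) := by
    intro s t
    have hm : ∀ y ∈ s.toFinset, MeasurableSet (P ⁻¹' {y}) :=
      fun y _ => hPm (.of_discrete)
    have e1 := sum_measure_preimage_singleton (μ := Pr) s.toFinset hm
    have e2 := sum_measure_preimage_singleton (μ := Pr.restrict (U ⁻¹' t)) s.toFinset hm
    rw [Set.coe_toFinset] at e1 e2
    rw [Measure.restrict_apply (hPm (.of_discrete))] at e2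
    rw [← e1, ← e2, Finset.sum_mul]
    refine Finset.sum_congr rfl fun p _ => ?_
    rw [Measure.restrict_apply (hPm (.of_discrete)), ← huni p t,
      ← indepFun_iff_measure_inter_preimage_eq_mul.mp hindep _ _ (.of_discrete) (.of_discrete)]
    congr 1
    ext ω
    simp only [Set.mem_inter_iff, Set.mem_preimage, Set.mem_singleton_iff]
    refine and_congr_right fun h => ?_
    simp only [hU, g, h]
  rw [indepFun_iff_measure_inter_preimage_eq_mul]
  intro s t _ _
  have h1 := key Set.univ t
  simp only [Set.preimage_univ, Set.univ_inter, measure_univ, one_mul] at h1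
  rw [key, h1]
end

section
/- (Lemma 4: query privacy against T colluding databases.) Let F be a finite field, let E, T ≥ 1, and let β_1, …, β_T ∈ F be pairwise distinct and nonzero. Let (Ω, ℙ) be a probability space, θ : Ω → Fin E a random variable, and Z : Ω → (Fin T → (Fin E → F)) uniformly distributed and independent of θ. Define the queries Q : Ω → (Fin T → (Fin E → F)) by Q_k(e) = 𝟙{e = θ} + Σ_{ℓ=1}^T β_k^ℓ Z_ℓ(e), where 𝟙{e = θ} ∈ F is 1 if e = θ and 0 otherwise. Then θ and Q are independent: any T colluding databases learn nothing about the queried index θ. -/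
open MeasureTheory ProbabilityTheory

theorem aux_map_uniform {A : Type*} [Fintype A] [Nonempty A] [MeasurableSpace A]
    [DiscreteMeasurableSpace A] (g : A → A) (hg : Function.Injective g) :
    Measure.map g (PMF.uniformOfFintype A).toMeasure = (PMF.uniformOfFintype A).toMeasure := by
  have hb : Function.Bijective g := Finite.injective_iff_bijective.mp hg
  refine Measure.ext_of_singleton fun a => ?_
  obtain ⟨b, rfl⟩ := hb.2 a
  have hpre : g ⁻¹' {g b} = {b} := by
    ext x
    simp [hg.eq_iff]
  rw [Measure.map_apply (measurable_of_finite g) (measurableSet_singleton _), hpre,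
    PMF.toMeasure_apply_singleton _ _ (measurableSet_singleton _),
    PMF.toMeasure_apply_singleton _ _ (measurableSet_singleton _)]
  simp

theorem aux_indep {A B Ω : Type*} [Fintype A] [Nonempty A] [MeasurableSpace A]
    [DiscreteMeasurableSpace A] [Finite B] [MeasurableSpace B] [DiscreteMeasurableSpace B]
    [MeasurableSpace Ω] (Pr : Measure Ω) [IsProbabilityMeasure Pr]
    (θ : Ω → B) (Z : Ω → A) (hθm : Measurable θ) (hZm : Measurable Z)
    (hZ : Measure.map Z Pr = (PMF.uniformOfFintype A).toMeasure)
    (hindep : IndepFun θ Z Pr) (f : B → A → A) (hf : ∀ b, Function.Injective (f b)) :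
    IndepFun θ (fun ω => f (θ ω) (Z ω)) Pr := by
  have hfm : Measurable (Function.uncurry f) := measurable_of_finite _
  have hQm : Measurable (fun ω => f (θ ω) (Z ω)) := hfm.comp (hθm.prodMk hZm)
  have : IsProbabilityMeasure (Measure.map θ Pr) :=
    Measure.isProbabilityMeasure_map hθm.aemeasurable
  have h1 := (indepFun_iff_map_prod_eq_prod_map_map hθm.aemeasurable hZm.aemeasurable).1 hindep
  have h2 := (MeasurePreserving.id (Measure.map θ Pr)).skew_product (g := f) hfm
    (Filter.Eventually.of_forall fun b => aux_map_uniform (f b) (hf b))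
  have h3 : Measure.map (fun ω => (θ ω, f (θ ω) (Z ω))) Pr
      = (Measure.map θ Pr).prod (PMF.uniformOfFintype A).toMeasure := by
    rw [← h2.map_eq, ← hZ, ← h1, Measure.map_map h2.measurable (hθm.prodMk hZm)]
    rfl
  have h4 : Measure.map (fun ω => f (θ ω) (Z ω)) Pr = (PMF.uniformOfFintype A).toMeasure := by
    have := congrArg (Measure.map Prod.snd) h3
    rw [Measure.map_map measurable_snd (hθm.prodMk hQm), Measure.map_snd_prod] at this
    simpa [Function.comp_def] using this
  rw [indepFun_iff_map_prod_eq_prod_map_map hθm.aemeasurable hQm.aemeasurable, h3, h4]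

theorem aux_inj {F : Type*} [Field F] (E T : ℕ)
    (β : Fin T → F) (hβ : Function.Injective β) (hβ0 : ∀ k, β k ≠ 0) (t : Fin E) :
    Function.Injective (fun (z : Fin T → Fin E → F) (k : Fin T) (e : Fin E) =>
      (if e = t then (1 : F) else 0) + ∑ ℓ : Fin T, β k ^ ((ℓ : ℕ) + 1) * z ℓ e) := by
  intro z w h
  have hv : IsUnit (Matrix.vandermonde β) := by
    rw [Matrix.isUnit_iff_isUnit_det, isUnit_iff_ne_zero]
    exact Matrix.det_vandermonde_ne_zero_iff.2 hβ
  have hinj := Matrix.mulVec_injective_iff_isUnit.2 hv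
  have key : ∀ e, (fun l => z l e) = fun l => w l e := by
    intro e
    apply hinj
    funext k
    have h' := congrFun (congrFun h k) e
    simp only [add_right_inj] at h'
    apply mul_left_cancel₀ (hβ0 k)
    simp only [Matrix.mulVec, dotProduct, Matrix.vandermonde_apply, Finset.mul_sum]
    simpa only [pow_succ', mul_assoc] using h'
  funext l e
  exact congrFun (key e) l

/-- Query privacy against `T` colluding databases: for pairwise distinct nonzero
`β_1, …, β_T` and `Z` uniform on `Fin T → (Fin E → F)` independent of `θ`, the queries
`Q_k(e) = 𝟙{e = θ} + ∑_{ℓ=1}^T β_k^ℓ Z_ℓ(e)` are independent of `θ`. -/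
theorem stmt6 {F : Type*} [Field F] [Fintype F] [MeasurableSpace F] [DiscreteMeasurableSpace F]
    {Ω : Type*} [MeasurableSpace Ω] (Pr : Measure Ω) [IsProbabilityMeasure Pr]
    (E T : ℕ) (hE : 1 ≤ E) (hT : 1 ≤ T)
    (β : Fin T → F) (hβ : Function.Injective β) (hβ0 : ∀ k, β k ≠ 0)
    (θ : Ω → Fin E) (Z : Ω → (Fin T → (Fin E → F)))
    (hθm : Measurable θ) (hZm : Measurable Z)
    (hZ : Measure.map Z Pr = (PMF.uniformOfFintype (Fin T → (Fin E → F))).toMeasure)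
    (hindep : IndepFun θ Z Pr) :
    IndepFun θ
      (fun ω (k : Fin T) (e : Fin E) =>
        (if e = θ ω then (1 : F) else 0) + ∑ ℓ : Fin T, β k ^ ((ℓ : ℕ) + 1) * Z ω ℓ e) Pr := by
  exact aux_indep Pr θ Z hθm hZm hZ hindep
    (fun t z k e => (if e = t then (1 : F) else 0) + ∑ ℓ : Fin T, β k ^ ((ℓ : ℕ) + 1) * z ℓ e)
    (aux_inj E T β hβ hβ0)
end

section
/- (Correctness of the PMA type I scheme; achievability in Theorem 1.) Let F be a field, E ≥ 1, M ≥ 1, N ≥ 1, and let β : Fin N → F be injective (β_j = 1+α_j pairwise distinct). Fix θ : Fin E, incidence vectors p : Fin M → (Fin E → F), noise vectors z : Fin M → Fin (N-1) → (Fin E → F), and masks s : Fin M → Fin N → F satisfying Σ_{i=1}^M s_{i,j} = 0 for every j. Define queries q_{i,j}(e) = 𝟙{e = θ} + Σ_{ℓ=1}^{N-1} β_j^ℓ z_{i,ℓ}(e) and answers a_{i,j} = Σ_{e} p_i(e) · q_{i,j}(e) + s_{i,j}. Let Υ be the N×N Vandermonde matrix with entries Υ_{j,ℓ} = β_j^ℓ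 for ℓ ∈ {0, …, N-1} (which is invertible since β is injective). Then the 0-th entry of Υ⁻¹ applied to the vector (Σ_{i=1}^M a_{i,j})_{j ∈ Fin N} equals Σ_{i=1}^M p_i(θ). -/
open Matrix

/-- Correctness of the PMA type I scheme: the user decodes the membership count
`∑ i, p i θ` from the summed masked answers by inverting the Vandermonde matrix. -/
theorem stmt8 {F : Type*} [Field F] (E M N : ℕ) (hE : 1 ≤ E) (hM : 1 ≤ M) (hN : 1 ≤ N)
    (β : Fin N → F) (hβ : Function.Injective β)
    (θ : Fin E) (p : Fin M → Fin E → F) (z : Fin M → Fin (N - 1) → Fin E → F)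
    (s : Fin M → Fin N → F) (hs : ∀ j, ∑ i, s i j = 0)
    (q : Fin M → Fin N → Fin E → F)
    (hq : ∀ i j e, q i j e
      = (if e = θ then 1 else 0) + ∑ ℓ : Fin (N - 1), β j ^ ((ℓ : ℕ) + 1) * z i ℓ e)
    (a : Fin M → Fin N → F)
    (ha : ∀ i j, a i j = (∑ e, p i e * q i j e) + s i j)
    (Vmat : Matrix (Fin N) (Fin N) F) (hVmat : ∀ j ℓ, Vmat j ℓ = β j ^ (ℓ : ℕ)) :
    (Vmat⁻¹ *ᵥ (fun j => ∑ i, a i j)) ⟨0, hN⟩ = ∑ i, p i θ := by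
  obtain ⟨n, rfl⟩ : ∃ n, N = n + 1 := ⟨N - 1, by omega⟩
  have hV : Vmat = Matrix.vandermonde β := by
    ext j l
    rw [hVmat, Matrix.vandermonde_apply]
  have hdet : IsUnit Vmat.det := by
    rw [hV, isUnit_iff_ne_zero]
    exact Matrix.det_vandermonde_ne_zero_iff.mpr hβ
  let c : Fin (n + 1) → F :=
    Fin.cons (∑ i, p i θ) (fun l : Fin n => ∑ i, ∑ e, p i e * z i l e)
  have key : (fun j => ∑ i, a i j) = Vmat *ᵥ c := by
    funext j
    have h1 : (Vmat *ᵥ c) j = (∑ i, p i θ)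
        + ∑ l : Fin n, β j ^ ((l : ℕ) + 1) * ∑ i, ∑ e, p i e * z i l e := by
      simp [Matrix.mulVec, dotProduct, Fin.sum_univ_succ, hVmat, c]
    rw [h1]
    simp only [ha, hq, Finset.sum_add_distrib, hs, mul_add, add_zero]
    congr 1
    · simp
    · simp only [Finset.mul_sum]
      symm
      rw [Finset.sum_comm]
      refine Finset.sum_congr rfl fun i _ => ?_
      rw [Finset.sum_comm]
      refine Finset.sum_congr rfl fun e _ => ?_
      refine Finset.sum_congr rfl fun l _ => ?_
      ring
  rw [key, Matrix.mulVec_mulVec, Matrix.nonsing_inv_mul _ hdet, Matrix.one_mulVec]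
  rfl
end

section
/- (Correctness of the SPMA type I scheme; achievability in Theorem 2.) Let F be a field, E ≥ 1, M ≥ 1, N ≥ 1, and let β : Fin N → F be injective. Fix θ : Fin E, incidence vectors p : Fin M → (Fin E → F), query noise z : Fin M → Fin (N-1) → (Fin E → F), server-side noise z' : Fin M → Fin (N-1) → F, and masks s : Fin M → Fin N → F satisfying Σ_{i=1}^M s_{i,j} = 0 for every j. Define queries q_{i,j}(e) = 𝟙{e = θ} + Σ_{ℓ=1}^{N-1} β_j^ℓ z_{i,ℓ}(e) and answers a_{i,j} = Σ_{e} p_i(e) · q_{i,j}(e) + Σ_{ℓ=1}^{N-1} β_j^ℓ z'_{i,ℓ} + s_{i,j}. Let Υ be the N×N Vandermonde matrix with entries Υ_{j,ℓ} = β_j^ℓ for ℓ ∈ {0, …, N-1}. Then the 0-th entry of Υ⁻¹ applied to the vector (Σ_{i=1}^M a_{i,j})_{j ∈ Fin N} equals Σ_{i=1}^M p_i(θ): the extra noise z' added by the databases to achieve symmetric privacy does not affect decodability of the count. -/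
open Matrix

/-- Correctness of the SPMA type I scheme: the extra server-side noise `z'` added to achieve
symmetric privacy does not affect decodability of the membership count `∑ i, p i θ`. -/
theorem stmt9 {F : Type*} [Field F] (E M N : ℕ) (hE : 1 ≤ E) (hM : 1 ≤ M) (hN : 1 ≤ N)
    (β : Fin N → F) (hβ : Function.Injective β)
    (θ : Fin E) (p : Fin M → Fin E → F) (z : Fin M → Fin (N - 1) → Fin E → F)
    (z' : Fin M → Fin (N - 1) → F)
    (s : Fin M → Fin N → F) (hs : ∀ j, ∑ i, s i j = 0)
    (q : Fin M → Fin N → Fin E → F)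
    (hq : ∀ i j e, q i j e
      = (if e = θ then 1 else 0) + ∑ ℓ : Fin (N - 1), β j ^ ((ℓ : ℕ) + 1) * z i ℓ e)
    (a : Fin M → Fin N → F)
    (ha : ∀ i j, a i j
      = (∑ e, p i e * q i j e) + (∑ ℓ : Fin (N - 1), β j ^ ((ℓ : ℕ) + 1) * z' i ℓ) + s i j)
    (Vmat : Matrix (Fin N) (Fin N) F) (hVmat : ∀ j ℓ, Vmat j ℓ = β j ^ (ℓ : ℕ)) :
    (Vmat⁻¹ *ᵥ (fun j => ∑ i, a i j)) ⟨0, hN⟩ = ∑ i, p i θ := by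
  obtain ⟨n, rfl⟩ : ∃ n, N = n + 1 := ⟨N - 1, by omega⟩
  have hV : Vmat = Matrix.vandermonde β := by
    ext j l
    rw [hVmat, Matrix.vandermonde_apply]
  have hdet : IsUnit Vmat.det := by
    rw [hV, isUnit_iff_ne_zero]
    exact Matrix.det_vandermonde_ne_zero_iff.mpr hβ
  let d : Fin n → F := fun l => ∑ i, ((∑ e, p i e * z i l e) + z' i l)
  let c : Fin (n + 1) → F := Fin.cons (∑ i, p i θ) d
  have key : (fun j => ∑ i, a i j) = Vmat *ᵥ c := by
    funext j
    have h1 : ∀ i, a i j = p i θ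
        + (∑ l : Fin n, β j ^ ((l : ℕ) + 1) * ((∑ e, p i e * z i l e) + z' i l)) + s i j := by
      intro i
      rw [ha]
      have h2 : ∑ e, p i e * q i j e
          = p i θ + ∑ l : Fin n, β j ^ ((l : ℕ) + 1) * (∑ e, p i e * z i l e) := by
        simp only [hq, mul_add, Finset.sum_add_distrib, Finset.mul_sum]
        rw [Finset.sum_comm]
        congr 1
        · simp
        · exact Finset.sum_congr rfl fun l _ => Finset.sum_congr rfl fun e _ => by ring
      rw [h2]
      simp only [mul_add, Finset.sum_add_distrib]
      exact congrArg (· + s i j) (add_assoc _ _ _)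
    have h3 : (Vmat *ᵥ c) j = (∑ i, p i θ) + ∑ l : Fin n, β j ^ ((l : ℕ) + 1) * d l := by
      simp [Matrix.mulVec, dotProduct, Fin.sum_univ_succ, hVmat, c]
    rw [h3]
    simp only [h1, Finset.sum_add_distrib, hs, add_zero]
    congr 1
    rw [Finset.sum_comm]
    refine Finset.sum_congr rfl fun l _ => ?_
    simp only [d, Finset.mul_sum]
  rw [key, Matrix.mulVec_mulVec, Matrix.nonsing_inv_mul _ hdet, Matrix.one_mulVec]
  rfl
end

section
/- (Correctness of the SPMA type II scheme; achievability in Theorem 3.) Let F be a field, E ≥ 1, M ≥ 1, and let N ≥ 1, μ ≥ 1, n be natural numbers with n = N + μ + 1. Let β : Fin n → F be injective. Fix θ : Fin E, incidence vectors p : Fin M → (Fin E → F), storage noise x : Fin N → (Fin E → F), query noise z : Fin μ → (Fin E → F), and server noise z' : Fin (n-1) → F. Define the encoded storage p̃_j(e) = Σ_{i=1}^M p_i(e) + Σ_{ℓ=1}^N β_j^ℓ x_ℓ(e), the queries q_j(e) = 𝟙{e = θ} + Σ_{k=1}^μ β_j^k z_k(e), and the answers a_j = Σ_{e} p̃_j(e)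 · q_j(e) + Σ_{i=1}^{n-1} β_j^i z'_i. Let Υ be the n×n Vandermonde matrix with entries Υ_{j,ℓ} = β_j^ℓ for ℓ ∈ {0, …, n-1}. Then the 0-th entry of Υ⁻¹ applied to the vector (a_j)_{j ∈ Fin n} equals Σ_{i=1}^M p_i(θ). -/
open Matrix

/-- Correctness of the SPMA type II scheme: with `n = N + μ + 1` databases holding securely
encoded aggregated storage, the user decodes the membership count `∑ i, p i θ` by inverting
the Vandermonde matrix of the distinct evaluation points. -/
theorem stmt10 {F : Type*} [Field F] (E M N μ n : ℕ) (hE : 1 ≤ E) (hM : 1 ≤ M)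
    (hN : 1 ≤ N) (hμ : 1 ≤ μ) (hn : n = N + μ + 1)
    (β : Fin n → F) (hβ : Function.Injective β)
    (θ : Fin E) (p : Fin M → Fin E → F) (x : Fin N → Fin E → F)
    (z : Fin μ → Fin E → F) (z' : Fin (n - 1) → F)
    (pt : Fin n → Fin E → F)
    (hpt : ∀ j e, pt j e = (∑ i, p i e) + ∑ ℓ : Fin N, β j ^ ((ℓ : ℕ) + 1) * x ℓ e)
    (q : Fin n → Fin E → F)
    (hq : ∀ j e, q j e = (if e = θ then 1 else 0) + ∑ k : Fin μ, β j ^ ((k : ℕ) + 1) * z k e)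
    (a : Fin n → F)
    (ha : ∀ j, a j = (∑ e, pt j e * q j e) + ∑ i : Fin (n - 1), β j ^ ((i : ℕ) + 1) * z' i)
    (Vmat : Matrix (Fin n) (Fin n) F) (hVmat : ∀ j ℓ, Vmat j ℓ = β j ^ (ℓ : ℕ)) :
    (Vmat⁻¹ *ᵥ a) ⟨0, by omega⟩ = ∑ i, p i θ := by
  subst hn
  let A : Fin E → Polynomial F := fun e =>
    Polynomial.C (∑ i, p i e) + ∑ ℓ : Fin N, Polynomial.X ^ ((ℓ : ℕ) + 1) * Polynomial.C (x ℓ e)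
  let B : Fin E → Polynomial F := fun e =>
    Polynomial.C (if e = θ then 1 else 0) +
      ∑ k : Fin μ, Polynomial.X ^ ((k : ℕ) + 1) * Polynomial.C (z k e)
  let D : Polynomial F :=
    ∑ i : Fin (N + μ + 1 - 1), Polynomial.X ^ ((i : ℕ) + 1) * Polynomial.C (z' i)
  let P : Polynomial F := (∑ e, A e * B e) + D
  have hS : ∀ (m : ℕ) (w : Fin m → F),
      (∑ i : Fin m, Polynomial.X ^ ((i : ℕ) + 1) * Polynomial.C (w i)).natDegree ≤ m := by
    intro m w
    refine Polynomial.natDegree_sum_le_of_forall_le _ _ fun i _ => ?_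
    refine (Polynomial.natDegree_mul_C_le _ _).trans ?_
    rw [Polynomial.natDegree_X_pow]
    exact i.2
  have hC : ∀ (m : ℕ) (c : F) (w : Fin m → F),
      (Polynomial.C c +
        ∑ i : Fin m, Polynomial.X ^ ((i : ℕ) + 1) * Polynomial.C (w i)).natDegree ≤ m := by
    intro m c w
    refine Polynomial.natDegree_add_le_of_degree_le ?_ (hS m w)
    rw [Polynomial.natDegree_C]
    exact Nat.zero_le _
  have hdeg : P.natDegree < N + μ + 1 := by
    refine Nat.lt_succ_of_le (Polynomial.natDegree_add_le_of_degree_le ?_ (hS _ z'))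
    refine Polynomial.natDegree_sum_le_of_forall_le _ _ fun e _ => ?_
    exact Polynomial.natDegree_mul_le_of_le (hC N _ _) (hC μ _ _)
  have heval : ∀ j, a j = P.eval (β j) := by
    intro j
    simp only [ha, hpt, hq, P, A, B, D, Polynomial.eval_add, Polynomial.eval_finsetSum,
      Polynomial.eval_mul, Polynomial.eval_C, Polynomial.eval_pow, Polynomial.eval_X]
  have hcoeff : P.coeff 0 = ∑ i, p i θ := by
    rw [Polynomial.coeff_zero_eq_eval_zero]
    simp only [P, A, B, D, Polynomial.eval_add, Polynomial.eval_finsetSum,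
      Polynomial.eval_mul, Polynomial.eval_C, Polynomial.eval_pow, Polynomial.eval_X]
    simp
  have hV : Vmat = Matrix.vandermonde β := by
    ext j l
    rw [hVmat, Matrix.vandermonde_apply]
  have hdet : IsUnit Vmat.det := by
    rw [hV]
    exact (Matrix.det_vandermonde_ne_zero_iff.mpr hβ).isUnit
  have haV : a = Vmat *ᵥ (fun l : Fin (N + μ + 1) => P.coeff l) := by
    ext j
    rw [heval, Polynomial.eval_eq_sum_range' hdeg, Finset.sum_range]
    simp only [Matrix.mulVec, dotProduct, hVmat]
    exact Finset.sum_congr rfl fun l _ => mul_comm _ _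
  rw [haV, Matrix.mulVec_mulVec, Matrix.nonsing_inv_mul _ hdet, Matrix.one_mulVec]
  exact hcoeff
end

section
/- (Cross-subspace alignment identity for the type II scheme.) Let F be a field, E ≥ 1, M ≥ 1, N ≥ 1, μ ≥ 1, and let β : J → F be any family of evaluation points indexed by a type J. Fix θ : Fin E, p : Fin M → (Fin E → F), x : Fin N → (Fin E → F), and z : Fin μ → (Fin E → F). Define p̃_j(e) = Σ_{i=1}^M p_i(e) + Σ_{ℓ=1}^N β_j^ℓ x_ℓ(e) and q_j(e) = 𝟙{e = θ} + Σ_{k=1}^μ β_j^k z_k(e). Then there exist coefficients c_1, …, c_{N+μ} ∈ F, not depending on j, such that for every j ∈ J: Σ_{e} p̃_j(e) · q_j(e) = Σ_{i=1}^M p_i(θ) + Σ_{d=1}^{N+μ} β_j^d c_d. That is, the inner product of encoded storage and query is the evaluation at β_j of a polynomial of degree at most N+μ whose constant term is the desired count Σ_i p_i(θ). -/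
/-- Cross-subspace alignment identity for the type II scheme: the inner product of encoded
storage and query is the evaluation at `β_j` of a polynomial of degree at most `N + μ`
whose constant term is the desired count `∑ i, p i θ`. -/
theorem stmt12 {F : Type*} [Field F] {J : Type*} (E M N μ : ℕ) (hE : 1 ≤ E) (hM : 1 ≤ M)
    (hN : 1 ≤ N) (hμ : 1 ≤ μ) (β : J → F)
    (θ : Fin E) (p : Fin M → Fin E → F) (x : Fin N → Fin E → F) (z : Fin μ → Fin E → F) :
    ∃ c : Fin (N + μ) → F, ∀ j : J,
      (∑ e, ((∑ i, p i e) + ∑ ℓ : Fin N, β j ^ ((ℓ : ℕ) + 1) * x ℓ e) *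
        ((if e = θ then 1 else 0) + ∑ k : Fin μ, β j ^ ((k : ℕ) + 1) * z k e))
      = (∑ i, p i θ) + ∑ d : Fin (N + μ), β j ^ ((d : ℕ) + 1) * c d := by
  classical
  let A : Fin E → Polynomial F := fun e =>
    Polynomial.C (∑ i, p i e) + ∑ l : Fin N, Polynomial.X ^ ((l : ℕ) + 1) * Polynomial.C (x l e)
  let B : Fin E → Polynomial F := fun e =>
    Polynomial.C (if e = θ then 1 else 0) +
      ∑ k : Fin μ, Polynomial.X ^ ((k : ℕ) + 1) * Polynomial.C (z k e)
  let P : Polynomial F := ∑ e, A e * B e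
  have key : ∀ (n : ℕ) (a : F) (y : Fin n → F),
      (Polynomial.C a + ∑ l : Fin n, Polynomial.X ^ ((l : ℕ) + 1) * Polynomial.C (y l)).natDegree
        ≤ n := by
    intro n a y
    refine Polynomial.natDegree_add_le_of_degree_le (by simp) ?_
    refine Polynomial.natDegree_sum_le_of_forall_le _ _ ?_
    intro l _
    refine (Polynomial.natDegree_mul_C_le _ _).trans ?_
    rw [Polynomial.natDegree_X_pow]
    exact l.2
  have hdeg : P.natDegree ≤ N + μ := by
    refine Polynomial.natDegree_sum_le_of_forall_le _ _ ?_
    intro e _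
    exact Polynomial.natDegree_mul_le_of_le (key N _ _) (key μ _ _)
  have heval : ∀ b : F, P.eval b =
      ∑ e, ((∑ i, p i e) + ∑ ℓ : Fin N, b ^ ((ℓ : ℕ) + 1) * x ℓ e) *
        ((if e = θ then 1 else 0) + ∑ k : Fin μ, b ^ ((k : ℕ) + 1) * z k e) := by
    intro b
    simp only [P, A, B, Polynomial.eval_finsetSum, Polynomial.eval_mul, Polynomial.eval_add,
      Polynomial.eval_C, Polynomial.eval_pow, Polynomial.eval_X]
  have h0 : P.coeff 0 = ∑ i, p i θ := by
    rw [Polynomial.coeff_zero_eq_eval_zero, heval]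
    simp
  refine ⟨fun d => P.coeff ((d : ℕ) + 1), fun j => ?_⟩
  rw [← heval, Polynomial.eval_eq_sum_range' (Nat.lt_succ_of_le hdeg), Finset.sum_range_succ', h0,
    Fin.sum_univ_eq_sum_range (fun d => β j ^ (d + 1) * P.coeff (d + 1)), add_comm]
  simp [mul_comm]
end

section
/- (Lemma 7: eavesdropper security for the SPMA type II scheme.) Let F be a finite field, n ≥ 2, and let β_1, …, β_n ∈ F be pairwise distinct and nonzero. Let (Ω, ℙ) be a probability space, let V : Ω → (Fin n → F) be any random variable (V_j representing the noise-free part p̃_j·q_j of the j-th answer, which is a deterministic function of the parties' data Σ_i P_i and the query), and let Z' : Ω → (Fin (n-1) → F) be uniformly distributed and independent of V. Define the answers A_j = V_j + Σ_{i=1}^{n-1} β_j^i Z'_i. Then for every subset 𝒴 ⊆ Fin n with |𝒴| ≤ n−1, the tuple (A_j)_{j ∈ 𝒴} is uniformly distributed on (Fin E → F)-free product F^{|𝒴|} and is independent of V: an eavesdropper observing at most n−1 answer links learns nothing about the parties' aggregated incidence data. -/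
open MeasureTheory ProbabilityTheory

lemma aux_surj {F : Type*} [Field F] (n : ℕ) (hn : 2 ≤ n) (β : Fin n → F)
    (hβ : Function.Injective β) (hβ0 : ∀ j, β j ≠ 0) (Y : Finset (Fin n)) (hY : Y.card ≤ n - 1)
    (y : Y → F) : ∃ z : Fin (n - 1) → F,
      (fun j : Y => ∑ i : Fin (n - 1), β (j : Fin n) ^ ((i : ℕ) + 1) * z i) = y := by
  classical
  let r : Fin n → F := fun j => if h : j ∈ Y then y ⟨j, h⟩ / β j else 0
  let p := Lagrange.interpolate Y β r
  have hinj : Set.InjOn β Y := hβ.injOn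
  have hdeg : p.degree < Y.card := Lagrange.degree_interpolate_lt r hinj
  have hnat : p.natDegree < n - 1 := by
    by_cases hp : p = 0
    · rw [hp, Polynomial.natDegree_zero]; omega
    · have := (Polynomial.natDegree_lt_iff_degree_lt hp).2 hdeg
      omega
  refine ⟨fun i => p.coeff i, ?_⟩
  funext j
  have h1 : p.eval (β j) = r j := Lagrange.eval_interpolate_at_node r hinj j.2
  rw [Polynomial.eval_eq_sum_range' hnat, Finset.sum_range] at h1
  have h2 : r j = y j / β j := by simp [r]
  have h3 : y j = β j * (y j / β j) := by field_simp [hβ0 j]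
  rw [h3, ← h2, ← h1, Finset.mul_sum]
  refine Finset.sum_congr rfl fun i _ => ?_
  ring

lemma aux_unif {B C : Type*} [AddCommGroup B] [AddCommGroup C] [Fintype B] [Fintype C]
    [MeasurableSpace B] [DiscreteMeasurableSpace B]
    [MeasurableSpace C] [DiscreteMeasurableSpace C]
    (L : B →+ C) (hL : Function.Surjective L) (w c : C) :
    (PMF.uniformOfFintype B).toMeasure ((fun z => w + L z) ⁻¹' {c}) =
      (PMF.uniformOfFintype C).toMeasure {c} := by
  classical
  have hk : ∀ d : C, (Finset.univ.filter (fun z => L z = d)).card =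
      (Finset.univ.filter (fun z => L z = 0)).card := fun d =>
    AddMonoidHom.card_fiber_eq_of_mem_range L (hL d) (hL 0)
  have htot : Fintype.card B = Fintype.card C * (Finset.univ.filter (fun z => L z = 0)).card := by
    rw [← Finset.card_univ, Finset.card_eq_sum_card_fiberwise (f := L) (t := Finset.univ)
      (by intro x _; simp)]
    simp [hk]
  have hpos : (Finset.univ.filter (fun z => L z = 0)).card ≠ 0 := by
    intro h
    rw [h, mul_zero] at htot
    exact Fintype.card_ne_zero htot
  have hset : ((fun z => w + L z) ⁻¹' {c}) =
      ((Finset.univ.filter (fun z => L z = c - w) : Finset B) : Set B) := by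
    ext z
    simp [eq_sub_iff_add_eq, add_comm]
  rw [hset, PMF.toMeasure_uniformOfFintype_apply _ (MeasurableSet.of_discrete),
    PMF.toMeasure_uniformOfFintype_apply _ (MeasurableSet.of_discrete)]
  simp only [Finset.coe_sort_coe, Fintype.card_coe, hk]
  rw [htot]
  simp only [Fintype.card_unique, Nat.cast_mul, Nat.cast_one]
  generalize (Finset.univ.filter (fun z => L z = 0)).card = k at hpos
  have hk0 : (k : ENNReal) ≠ 0 := by exact_mod_cast hpos
  simpa using ENNReal.mul_div_mul_right 1 (Fintype.card C : ENNReal) hk0 (ENNReal.natCast_ne_top k)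

lemma aux_main {A B C Ω : Type*} [Fintype A] [Fintype B] [Fintype C]
    [MeasurableSpace A] [DiscreteMeasurableSpace A]
    [MeasurableSpace B] [DiscreteMeasurableSpace B]
    [MeasurableSpace C] [DiscreteMeasurableSpace C] [MeasurableSpace Ω]
    (Pr : Measure Ω) [IsProbabilityMeasure Pr] (V : Ω → A) (Z : Ω → B)
    (hV : Measurable V) (hZ : Measurable Z) (hind : IndepFun V Z Pr)
    (ν : Measure C) [IsProbabilityMeasure ν] (g : A → B → C)
    (hg : ∀ a c, Measure.map Z Pr (g a ⁻¹' {c}) = ν {c}) :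
    Measure.map (fun ω => g (V ω) (Z ω)) Pr = ν ∧ IndepFun V (fun ω => g (V ω) (Z ω)) Pr := by
  have hgm : Measurable (fun ω => g (V ω) (Z ω)) :=
    (measurable_of_countable (fun p : A × B => g p.1 p.2)).comp (hV.prodMk hZ)
  haveI := Measure.isProbabilityMeasure_map (μ := Pr) hV.aemeasurable
  have key : Measure.map (fun ω => (V ω, g (V ω) (Z ω))) Pr = (Measure.map V Pr).prod ν := by
    refine Measure.ext_of_singleton ?_
    rintro ⟨a, c⟩
    rw [Measure.map_apply (hV.prodMk hgm) MeasurableSet.of_discrete, ← Set.singleton_prod_singleton,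
      Measure.prod_prod, ← hg a c, Measure.map_apply hV MeasurableSet.of_discrete,
      Measure.map_apply hZ MeasurableSet.of_discrete,
      ← hind.measure_inter_preimage_eq_mul _ _ MeasurableSet.of_discrete MeasurableSet.of_discrete]
    congr 1
    ext ω
    simp only [Set.mem_preimage, Set.mem_prod, Set.mem_singleton_iff, Set.mem_inter_iff]
    constructor
    · rintro ⟨rfl, h⟩; exact ⟨rfl, h⟩
    · rintro ⟨rfl, h⟩; exact ⟨rfl, h⟩
  have h1 : Measure.map (fun ω => g (V ω) (Z ω)) Pr = ν := by
    have := congrArg (Measure.map Prod.snd) key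
    rw [Measure.map_map measurable_snd (hV.prodMk hgm), Measure.map_snd_prod] at this
    simpa [Function.comp_def] using this
  refine ⟨h1, ?_⟩
  rw [indepFun_iff_map_prod_eq_prod_map_map hV.aemeasurable hgm.aemeasurable, h1]
  exact key

/-- Eavesdropper security for the SPMA type II scheme: with uniform shared randomness
`Z'_1, …, Z'_{n-1}` independent of the noise-free answers `V`, any at most `n - 1` of the
masked answers `A_j = V_j + ∑_{i=1}^{n-1} β_j^i Z'_i` are jointly uniform and independent
of `V`. -/
theorem stmt14 {F : Type*} [Field F] [Fintype F] [MeasurableSpace F] [DiscreteMeasurableSpace F]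
    {Ω : Type*} [MeasurableSpace Ω] (Pr : Measure Ω) [IsProbabilityMeasure Pr]
    (n : ℕ) (hn : 2 ≤ n) (β : Fin n → F) (hβ : Function.Injective β) (hβ0 : ∀ j, β j ≠ 0)
    (V : Ω → (Fin n → F)) (Z' : Ω → (Fin (n - 1) → F))
    (hVm : Measurable V) (hZm : Measurable Z')
    (hZ : Measure.map Z' Pr = (PMF.uniformOfFintype (Fin (n - 1) → F)).toMeasure)
    (hindep : IndepFun V Z' Pr) :
    ∀ 𝒴 : Finset (Fin n), 𝒴.card ≤ n - 1 →
      Measure.map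
          (fun ω => fun j : 𝒴 =>
            V ω j + ∑ i : Fin (n - 1), β (j : Fin n) ^ ((i : ℕ) + 1) * Z' ω i) Pr
        = (PMF.uniformOfFintype (𝒴 → F)).toMeasure ∧
      IndepFun V
        (fun ω => fun j : 𝒴 =>
          V ω j + ∑ i : Fin (n - 1), β (j : Fin n) ^ ((i : ℕ) + 1) * Z' ω i) Pr := by
  intro Y hY
  let L : (Fin (n - 1) → F) →+ (Y → F) :=
    { toFun := fun z => fun j : Y => ∑ i : Fin (n - 1), β (j : Fin n) ^ ((i : ℕ) + 1) * z i
      map_zero' := by funext j; simp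
      map_add' := by intro x y; funext j; simp [mul_add, Finset.sum_add_distrib] }
  have hL : Function.Surjective L := fun y => aux_surj n hn β hβ hβ0 Y hY y
  exact aux_main Pr V Z' hVm hZm hindep (PMF.uniformOfFintype (Y → F)).toMeasure
    (fun v z => (fun j : Y => v j) + L z)
    (fun v c => by rw [hZ]; exact aux_unif L hL _ c)
end
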